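/- Let A, A', A'' be abelian groups, where A' is finitely generated of rank 1. Let ψ : D → A' (with D ⊆ A) be a relative partial dilatation from A to A' with defining pair (v, v'), and let ψ' : D' → A'' (with D' ⊆ A') be a relative partial dilatation from A' to A'' with defining pair (w', w''). Then the image of ψ contains ℤ·v', and the composite partial map χ defined on { x ∈ D : ψ(x) ∈ D' } by χ(x) = ψ'(ψ(x)) is a relative partial dilatation from A to A''. In fact there exist nonzero integers m, n with m·v' = n·w', and (m·v, n·w'') is a defining pair for χ. -/

import Mathlib

/-!
Because `A'` has rank one, `v'` and `w'` are linearly dependent, and because both have infinite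
order, a dependence relation `m • v' = n • w'` has both coefficients nonzero. Hence the composite
sends `k • m • v` through `k • m • v' = k • n • w'` to `k • n • w''`.
-/

section Rank

theorem exists_smul_eq_smul_of_rank_le_one {R M : Type*} [Ring R] [Nontrivial R] [AddCommGroup M]
    [Module R M] (hM : Module.rank R M ≤ 1) {x y : M}
    (hx : ∀ r : R, r • x = 0 → r = 0) (hy : ∀ r : R, r • y = 0 → r = 0) :
    ∃ r s : R, r ≠ 0 ∧ s ≠ 0 ∧ r • x = s • y := by
  have hdep : ¬ LinearIndependent R ![x, -y] := fun h => by
    simpa using h.cardinal_lift_le_rank.trans (Cardinal.lift_le.2 hM)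
  simp only [LinearIndependent.pair_iff, smul_neg, ← sub_eq_add_neg, sub_eq_zero,
    not_forall] at hdep
  obtain ⟨r, s, hrs, hne⟩ := hdep
  have hs_zero (h : r = 0) : s = 0 := hy s (by rw [← hrs, h, zero_smul])
  have hr_zero (h : s = 0) : r = 0 := hx r (by rw [hrs, h, zero_smul])
  exact ⟨r, s, fun h => hne ⟨h, hs_zero h⟩, fun h => hne ⟨hr_zero h, h⟩, hrs⟩

theorem rank_int_eq_one_of_quotient_torsion_equiv {G : Type*} [AddCommGroup G]
    (e : (G ⧸ AddCommGroup.torsion G) ≃+ ℤ) : Module.rank ℤ G = 1 := by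
  let e' : (G ⧸ (AddCommGroup.torsion G).toIntSubmodule) ≃+ ℤ := e
  rw [Module.rank_eq_one_iff_finrank_eq_one, ← finrank_quotient_torsion_eq,
    e'.toIntLinearEquiv.finrank_eq, Module.finrank_self]

end Rank

section PartialMap

variable {α β γ : Type*} {D : Set α} {D' : Set β}

/-- The partial map `α →. β` with domain `D` given by a function on the subtype `D`, so that
composition of partial maps is `PFun.comp`. -/
def pfunOn (f : D → β) : α →. β :=
  fun a => ⟨a ∈ D, fun h => f ⟨a, h⟩⟩

theorem mem_ran_pfunOn {f : D → β} {b : β} : b ∈ (pfunOn f).ran ↔ ∃ x : D, f x = b :=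
  ⟨fun ⟨a, h, hb⟩ => ⟨⟨a, h⟩, hb⟩, fun ⟨⟨a, h⟩, hb⟩ => ⟨a, h, hb⟩⟩

theorem mem_comp_pfunOn {f : D → β} {g : D' → γ} {a : α} {c : γ} :
    c ∈ (pfunOn g).comp (pfunOn f) a ↔
      ∃ (h₁ : a ∈ D) (h₂ : f ⟨a, h₁⟩ ∈ D'), g ⟨f ⟨a, h₁⟩, h₂⟩ = c :=
  ⟨fun ⟨⟨h₁, h₂⟩, h⟩ => ⟨h₁, h₂, h⟩, fun ⟨h₁, h₂, h⟩ => ⟨⟨h₁, h₂⟩, h⟩⟩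

end PartialMap

section Dilatation

variable {R A A' A'' : Type*} [Ring R] [AddCommGroup A] [AddCommGroup A'] [AddCommGroup A'']
  [Module R A] [Module R A'] [Module R A'']

variable (R) in
/-- `(v, v')` is a defining pair of the relative partial dilatation `f`: both vectors have infinite
order, and `f` is defined on `R • v`, where it sends `r • v` to `r • v'`. The notion for abelian
groups is the case `R = ℤ`. -/
structure IsDefiningPair (f : A →. A') (v : A) (v' : A') : Prop where
  eq_zero_of_smul_left : ∀ r : R, r • v = 0 → r = 0
  eq_zero_of_smul_right : ∀ r : R, r • v' = 0 → r = 0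
  smul_mem : ∀ r : R, r • v' ∈ f (r • v)

namespace IsDefiningPair

variable {f : A →. A'} {g : A' →. A''} {v : A} {v' w' : A'} {w'' : A''}

theorem smul_mem_ran (hf : IsDefiningPair R f v v') (r : R) : r • v' ∈ f.ran :=
  ⟨r • v, hf.smul_mem r⟩

theorem smul [NoZeroDivisors R] (hf : IsDefiningPair R f v v') {m : R} (hm : m ≠ 0) :
    IsDefiningPair R f (m • v) (m • v') where
  eq_zero_of_smul_left r hr :=
    (mul_eq_zero.1 (hf.eq_zero_of_smul_left (r * m) (by rwa [mul_smul]))).resolve_right hm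
  eq_zero_of_smul_right r hr :=
    (mul_eq_zero.1 (hf.eq_zero_of_smul_right (r * m) (by rwa [mul_smul]))).resolve_right hm
  smul_mem r := by simpa only [mul_smul] using hf.smul_mem (r * m)

theorem comp (hg : IsDefiningPair R g v' w'') (hf : IsDefiningPair R f v v') :
    IsDefiningPair R (g.comp f) v w'' where
  eq_zero_of_smul_left := hf.eq_zero_of_smul_left
  eq_zero_of_smul_right := hg.eq_zero_of_smul_right
  smul_mem r := Part.mem_bind (hf.smul_mem r) (hg.smul_mem r)

end IsDefiningPair

theorem relativePartialDilatation_comp_general [Nontrivial R] [NoZeroDivisors R]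
    (hA' : Module.rank R A' ≤ 1) {f : A →. A'} {g : A' →. A''}
    {v : A} {v' w' : A'} {w'' : A''}
    (hf : IsDefiningPair R f v v') (hg : IsDefiningPair R g w' w'') :
    (∀ r : R, r • v' ∈ f.ran) ∧
      ∃ m n : R, m ≠ 0 ∧ n ≠ 0 ∧ m • v' = n • w' ∧
        IsDefiningPair R (g.comp f) (m • v) (n • w'') := by
  obtain ⟨m, n, hm, hn, hmn⟩ := exists_smul_eq_smul_of_rank_le_one hA'
    hf.eq_zero_of_smul_right hg.eq_zero_of_smul_left
  have hg' : IsDefiningPair R g (m • v') (n • w'') := hmn ▸ hg.smul hn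
  exact ⟨hf.smul_mem_ran, m, n, hm, hn, hmn, hg'.comp (hf.smul hm)⟩

end Dilatation

/-- If `ψ : D → A'` is a relative partial dilatation from `A` to `A'`
with defining pair `(v, v')`, and `ψ' : D' → A''` is a relative partial dilatation
from `A'` to `A''` with defining pair `(w', w'')`, where `A'` is finitely generated
of rank 1 (its quotient by its torsion subgroup is infinite cyclic), then the image
of `ψ` contains `ℤ·v'`, and the composite partial map is a relative partial
dilatation from `A` to `A''`: there are nonzero integers `m, n` with
`m·v' = n·w'`, and `(m·v, n·w'')` is a defining pair for the composite. -/
theorem relativePartialDilatation_comp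
    {A A' A'' : Type*} [AddCommGroup A] [AddCommGroup A'] [AddCommGroup A'']
    [AddGroup.FG A']
    (u : (A' ⧸ AddCommGroup.torsion A') ≃+ ℤ)
    (D : Set A) (ψ : D → A')
    (D' : Set A') (ψ' : D' → A'')
    (v : A) (v' : A')
    (hv : ∀ n : ℤ, n • v = 0 → n = 0)
    (hv' : ∀ n : ℤ, n • v' = 0 → n = 0)
    (hDv : ∀ m : ℤ, m • v ∈ D)
    (hψv : ∀ m : ℤ, ψ ⟨m • v, hDv m⟩ = m • v')
    (w' : A') (w'' : A'')
    (hw' : ∀ n : ℤ, n • w' = 0 → n = 0)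
    (hw'' : ∀ n : ℤ, n • w'' = 0 → n = 0)
    (hD'w : ∀ m : ℤ, m • w' ∈ D')
    (hψ'w : ∀ m : ℤ, ψ' ⟨m • w', hD'w m⟩ = m • w'') :
    (∀ m : ℤ, ∃ x : D, ψ x = m • v') ∧
      ∃ m n : ℤ, m ≠ 0 ∧ n ≠ 0 ∧ m • v' = n • w' ∧
        (∀ k : ℤ, k • (m • v) = 0 → k = 0) ∧
        (∀ k : ℤ, k • (n • w'') = 0 → k = 0) ∧
        (∀ k : ℤ, ∃ (h₁ : k • (m • v) ∈ D)
            (h₂ : ψ ⟨k • (m • v), h₁⟩ ∈ D'),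
            ψ' ⟨ψ ⟨k • (m • v), h₁⟩, h₂⟩ = k • (n • w'')) := by
  obtain ⟨hran, m, n, hm, hn, hmn, hχ⟩ := relativePartialDilatation_comp_general
    (f := pfunOn ψ) (g := pfunOn ψ') (rank_int_eq_one_of_quotient_torsion_equiv u).le
    ⟨hv, hv', fun k => ⟨hDv k, hψv k⟩⟩ ⟨hw', hw'', fun k => ⟨hD'w k, hψ'w k⟩⟩
  exact ⟨fun k => mem_ran_pfunOn.1 (hran k), m, n, hm, hn, hmn, hχ.eq_zero_of_smul_left,
    hχ.eq_zero_of_smul_right, fun k => mem_comp_pfunOn.1 (hχ.smul_mem k)⟩
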